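/- Under hypotheses (H0)–(H3), if ψ: E→ℝ is Lipschitz with ⟨ψ,μ*⟩=0, then the strong law of large numbers holds: (1/n) Σ_{i=1}^n ψ(X_i) → 0 P_μ-almost surely as n → ∞. -/

import Mathlib

open MeasureTheory ProbabilityTheory Filter Bornology
open scoped ENNReal NNReal Topology

variable {E : Type*} [MeasurableSpace E] [MetricSpace E] [CompleteSpace E]
  [SecondCountableTopology E] [BorelSpace E]

/-- The Markov operator acting on functions: `Pf(x) = ∫ f(y) π(x, dy)`. -/
noncomputable def Pfun (π : Kernel E E) (f : E → ℝ) : E → ℝ := fun x => ∫ y, f y ∂(π x)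

/-- The Markov operator acting on measures (the transfer operator `ν ↦ νP`). -/
noncomputable def Pmeas (π : Kernel E E) (ν : MeasureTheory.Measure E) :
    MeasureTheory.Measure E := ν.bind (fun x => π x)

/-- `ν ∈ M_{1,1}`: a Borel probability measure with finite first moment. -/
def FiniteFirstMoment (ν : MeasureTheory.Measure E) : Prop :=
  IsProbabilityMeasure ν ∧ ∃ x₀ : E, Integrable (fun x => dist x₀ x) ν

/-- The Wasserstein (dual-Lipschitz) distance between two measures. -/
noncomputable def wassDist (ν₁ ν₂ : MeasureTheory.Measure E) : ℝ :=
  sSup {r : ℝ | ∃ f : E → ℝ, LipschitzWith 1 f ∧ r = |∫ x, f x ∂ν₁ - ∫ x, f x ∂ν₂|}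

/-- The natural filtration of the coordinate process on `ℕ → E`. -/
def natFilt : Filtration ℕ (MeasurableSpace.pi : MeasurableSpace (ℕ → E)) :=
  Filtration.natural (fun k (ω : ℕ → E) => ω k)
    (fun k => (measurable_pi_apply k).stronglyMeasurable)

/-- `ℙ` is the law of the Markov chain on `E^ℕ` with transition probability `π` and
initial distribution `ν`. -/
structure IsMarkovChainLaw (π : Kernel E E) (ν : MeasureTheory.Measure E)
    (P : MeasureTheory.Measure (ℕ → E)) : Prop where
  prob : IsProbabilityMeasure P
  init : P.map (fun ω => ω 0) = ν
  markov : ∀ (n : ℕ) (g : E → ℝ), Measurable g → IsBounded (Set.range g) →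
    P[(fun ω => g (ω (n + 1))) | natFilt n] =ᵐ[P] fun ω => ∫ y, g y ∂(π (ω n))

/-- The corrector function `χ = ∑_{i≥0} Pⁱψ`. -/
noncomputable def chiFun (π : Kernel E E) (ψ : E → ℝ) : E → ℝ :=
  fun x => ∑' i : ℕ, (Pfun π)^[i] ψ x

/-- The martingale `S_n = χ(X_n) - χ(X_0) + ∑_{i=0}^n ψ(X_i)` as a function of the trajectory. -/
noncomputable def SFun (π : Kernel E E) (ψ : E → ℝ) (n : ℕ) : (ℕ → E) → ℝ :=
  fun ω => chiFun π ψ (ω n) - chiFun π ψ (ω 0) + ∑ i ∈ Finset.range (n + 1), ψ (ω i)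

/-- The martingale differences `Z_n = χ(X_n) - χ(X_{n-1}) + ψ(X_n)`. -/
noncomputable def ZFun (π : Kernel E E) (ψ : E → ℝ) (n : ℕ) : (ℕ → E) → ℝ :=
  fun ω => chiFun π ψ (ω n) - chiFun π ψ (ω (n - 1)) + ψ (ω n)


/-- Kronecker's lemma with weights `k + 1`. -/
lemma kronecker_aux (z : ℕ → ℝ) (l : ℝ)
    (h : Tendsto (fun n => ∑ k ∈ Finset.range n, z k / ((k : ℝ) + 1)) atTop (𝓝 l)) :
    Tendsto (fun n : ℕ => (∑ k ∈ Finset.range n, z k) / (n : ℝ)) atTop (𝓝 0) := by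
  set M : ℕ → ℝ := fun n => ∑ k ∈ Finset.range n, z k / ((k : ℝ) + 1) with hM
  have key : ∀ n : ℕ, ∑ k ∈ Finset.range n, z k
      = (n : ℝ) * M n - ∑ k ∈ Finset.range n, M k := by
    intro n
    induction n with
    | zero => simp
    | succ n ih =>
      have h1 : M (n + 1) = M n + z n / ((n : ℝ) + 1) := by
        simp only [hM, Finset.sum_range_succ]
      have h2 : z n / ((n : ℝ) + 1) * ((n : ℝ) + 1) = z n :=
        div_mul_cancel₀ _ (by positivity)
      rw [Finset.sum_range_succ, Finset.sum_range_succ, ih, h1]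
      push_cast
      linarith
  have h3 := h.sub h.cesaro
  rw [sub_self] at h3
  refine h3.congr' ?_
  filter_upwards [eventually_gt_atTop 0] with n hn
  have : (n : ℝ) ≠ 0 := by positivity
  rw [key]
  field_simp

lemma summable_inv_sq : Summable (fun k : ℕ => (((k : ℝ) + 1) ^ 2)⁻¹) := by
  have := (summable_nat_add_iff 1).2 (Real.summable_nat_pow_inv.2 (one_lt_two))
  simpa using this

/-- Strong law of large numbers for martingale differences bounded in `L²`. -/
lemma slln_martingale_diff {Ω : Type*} {m0 : MeasurableSpace Ω} (P : Measure Ω)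
    [IsProbabilityMeasure P] (ℱ : Filtration ℕ m0) (Z : ℕ → Ω → ℝ) (B : ℝ)
    (hZm : ∀ k, StronglyMeasurable[ℱ (k + 1)] (Z k)) (hZ2 : ∀ k, MemLp (Z k) 2 P)
    (hB : ∀ k, ∫ ω, Z k ω ^ 2 ∂P ≤ B) (hZ0 : ∀ k, P[Z k | ℱ k] =ᵐ[P] 0) :
    ∀ᵐ ω ∂P, Tendsto (fun n : ℕ => (∑ k ∈ Finset.range n, Z k ω) / (n : ℝ)) atTop (𝓝 0) := by
  set M : ℕ → Ω → ℝ := fun n ω => ∑ k ∈ Finset.range n, ((k : ℝ) + 1)⁻¹ * Z k ω with hM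
  have hMs : ∀ n, M (n + 1) = M n + fun ω => ((n : ℝ) + 1)⁻¹ * Z n ω := by
    intro n; ext ω; simp only [hM, Finset.sum_range_succ, Pi.add_apply]
  have hM2 : ∀ n, MemLp (M n) 2 P := fun n =>
    memLp_finsetSum _ fun k _ => (hZ2 k).const_mul _
  have hMm : ∀ n, StronglyMeasurable[ℱ n] (M n) := by
    intro n
    refine Finset.stronglyMeasurable_fun_sum _ fun k hk => ?_
    exact ((hZm k).mono (ℱ.mono (Finset.mem_range.1 hk))).const_mul _
  have hZint : ∀ k, Integrable (Z k) P := fun k => (hZ2 k).integrable (by norm_num)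
  have hMint : ∀ k, Integrable (M k) P := fun k => (hM2 k).integrable (by norm_num)
  have hmart : Martingale M ℱ P := by
    refine martingale_of_condExp_sub_eq_zero_nat hMm hMint fun n => ?_
    have : M (n + 1) - M n = ((n : ℝ) + 1)⁻¹ • Z n := by
      rw [hMs]; ext ω; simp
    rw [this]
    filter_upwards [condExp_smul (μ := P) ((n : ℝ) + 1)⁻¹ (Z n) (ℱ n), hZ0 n] with ω h1 h2
    rw [h1]; simp [h2]
  have hcross : ∀ n, ∫ ω, M n ω * Z n ω ∂P = 0 := by
    intro n
    have hint : Integrable (M n * Z n) P := (hM2 n).integrable_mul (hZ2 n)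
    have h1 := condExp_mul_of_stronglyMeasurable_left (hMm n) hint (hZint n)
    have h2 := integral_condExp (μ := P) (f := M n * Z n) (ℱ.le n)
    have h3 : ∫ ω, (P[M n * Z n | ℱ n]) ω ∂P = 0 := by
      rw [← integral_zero Ω ℝ (μ := P)]
      refine integral_congr_ae ?_
      filter_upwards [h1, hZ0 n] with ω h1 h2
      rw [h1]; simp [h2]
    rw [h3] at h2
    exact h2.symm
  have hstep : ∀ n, ∫ ω, M (n + 1) ω ^ 2 ∂P ≤ ∫ ω, M n ω ^ 2 ∂P + (((n : ℝ) + 1) ^ 2)⁻¹ * B := by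
    intro n
    have e : ∀ ω, M (n + 1) ω ^ 2 = M n ω ^ 2 + 2 * ((n : ℝ) + 1)⁻¹ * (M n ω * Z n ω)
        + (((n : ℝ) + 1) ^ 2)⁻¹ * Z n ω ^ 2 := by
      intro ω; rw [hMs]; simp only [Pi.add_apply]; rw [← inv_pow]; ring
    have i1 : Integrable (fun ω => M n ω ^ 2) P := (hM2 n).integrable_sq
    have i2 : Integrable (fun ω => M n ω * Z n ω) P := (hM2 n).integrable_mul (hZ2 n)
    have i3 : Integrable (fun ω => Z n ω ^ 2) P := (hZ2 n).integrable_sq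
    simp_rw [e]
    rw [integral_add (by exact i1.add (i2.const_mul _)) (i3.const_mul _), integral_add i1 (i2.const_mul _),
      integral_const_mul, integral_const_mul, hcross]
    have := mul_le_mul_of_nonneg_left (hB n) (show 0 ≤ (((n : ℝ) + 1) ^ 2)⁻¹ by positivity)
    linarith
  have hB0 : 0 ≤ B := (integral_nonneg fun ω => sq_nonneg _).trans (hB 0)
  have hbd : ∀ n, ∫ ω, M n ω ^ 2 ∂P ≤ ∑ k ∈ Finset.range n, (((k : ℝ) + 1) ^ 2)⁻¹ * B := by
    intro n
    induction n with
    | zero => simp [hM]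
    | succ n ih => rw [Finset.sum_range_succ]; linarith [hstep n]
  have hsum : Summable (fun k : ℕ => (((k : ℝ) + 1) ^ 2)⁻¹ * B) := summable_inv_sq.mul_right _
  set S := ∑' k : ℕ, (((k : ℝ) + 1) ^ 2)⁻¹ * B with hS
  have hbd' : ∀ n, ∫ ω, M n ω ^ 2 ∂P ≤ S := fun n =>
    (hbd n).trans (hsum.sum_le_tsum _ fun k _ => by positivity)
  have hL1 : ∀ n, eLpNorm (M n) 1 P ≤ ((1 + S).toNNReal : ℝ≥0∞) := by
    intro n
    rw [eLpNorm_one_eq_lintegral_enorm, ← ofReal_integral_norm_eq_lintegral_enorm (hMint n)]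
    refine ENNReal.ofReal_le_ofReal ?_
    calc ∫ ω, ‖M n ω‖ ∂P ≤ ∫ ω, (1 + M n ω ^ 2) ∂P := by
          refine integral_mono (hMint n).norm ((integrable_const _).add (hM2 n).integrable_sq) ?_
          intro ω
          simp only [Real.norm_eq_abs]
          nlinarith [sq_abs (M n ω), sq_nonneg (|M n ω| - 1)]
      _ = 1 + ∫ ω, M n ω ^ 2 ∂P := by
          rw [integral_add (integrable_const _) (hM2 n).integrable_sq]; simp
      _ ≤ 1 + S := by linarith [hbd' n]
  filter_upwards [hmart.submartingale.exists_ae_tendsto_of_bdd hL1] with ω ⟨l, hl⟩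
  refine kronecker_aux _ l (hl.congr fun n => ?_)
  refine Finset.sum_congr rfl fun k _ => ?_
  rw [div_eq_inv_mul]

/-- If second moments are bounded then `Y n / n → 0` almost surely. -/
lemma tendsto_div_of_sq_bdd {Ω : Type*} {m0 : MeasurableSpace Ω} (P : Measure Ω)
    [IsProbabilityMeasure P] (Y : ℕ → Ω → ℝ) (B : ℝ)
    (hY2 : ∀ k, MemLp (Y k) 2 P) (hB : ∀ k, ∫ ω, Y k ω ^ 2 ∂P ≤ B) :
    ∀ᵐ ω ∂P, Tendsto (fun n : ℕ => Y n ω / (n : ℝ)) atTop (𝓝 0) := by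
  have hB0 : 0 ≤ B := (integral_nonneg fun ω => sq_nonneg _).trans (hB 0)
  have hs : Summable (fun k : ℕ => (((k : ℝ)) ^ 2)⁻¹ * B) :=
    (Real.summable_nat_pow_inv.2 (one_lt_two)).mul_right _
  have i3 : ∀ n : ℕ, Integrable (fun ω => ((n : ℝ) ^ 2)⁻¹ * Y n ω ^ 2) P :=
    fun n => (hY2 n).integrable_sq.const_mul _
  have hfin : ∫⁻ ω, ∑' n : ℕ, ENNReal.ofReal (((n : ℝ) ^ 2)⁻¹ * Y n ω ^ 2) ∂P ≠ ∞ := by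
    rw [lintegral_tsum fun n => (i3 n).aestronglyMeasurable.aemeasurable.ennreal_ofReal]
    refine ne_top_of_le_ne_top hs.tsum_ofReal_ne_top (ENNReal.tsum_le_tsum fun n => ?_)
    rw [← ofReal_integral_eq_lintegral_ofReal (i3 n) (ae_of_all _ fun ω => by positivity),
      integral_const_mul]
    exact ENNReal.ofReal_le_ofReal (mul_le_mul_of_nonneg_left (hB n) (by positivity))
  have hae := ae_lt_top' (AEMeasurable.tsum fun n =>
    (i3 n).aestronglyMeasurable.aemeasurable.ennreal_ofReal) hfin
  filter_upwards [hae] with ω hω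
  have h1 := ENNReal.tendsto_atTop_zero_of_tsum_ne_top hω.ne
  have h2 := (ENNReal.tendsto_toReal ENNReal.zero_ne_top).comp h1
  have h3 := h2.sqrt
  simp only [ENNReal.toReal_zero, Real.sqrt_zero] at h3
  refine squeeze_zero_norm (fun n => ?_) h3
  simp only [Function.comp]
  rw [ENNReal.toReal_ofReal (by positivity), Real.norm_eq_abs, ← Real.sqrt_sq_eq_abs]
  apply le_of_eq; congr 1; rw [div_pow, div_eq_inv_mul]

/-- Lipschitz with a real constant. -/
def RLip {E : Type*} [MetricSpace E] (K : ℝ) (f : E → ℝ) : Prop :=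
  ∀ x y, |f x - f y| ≤ K * dist x y

lemma RLip.lipschitzWith {E : Type*} [MetricSpace E] {K : ℝ} {f : E → ℝ} (h : RLip K f) :
    LipschitzWith K.toNNReal f :=
  LipschitzWith.of_dist_le_mul fun x y => by
    rw [Real.dist_eq]
    exact (h x y).trans (mul_le_mul_of_nonneg_right (Real.le_coe_toNNReal K) dist_nonneg)

lemma RLip.continuous {E : Type*} [MetricSpace E] {K : ℝ} {f : E → ℝ} (h : RLip K f) :
    Continuous f := h.lipschitzWith.continuous

lemma RLip.abs {E : Type*} [MetricSpace E] {K : ℝ} {f : E → ℝ} (h : RLip K f) :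
    RLip K (fun x => |f x|) := fun x y => (abs_abs_sub_abs_le _ _).trans (h x y)

section
variable {E : Type*} [MeasurableSpace E] [MetricSpace E] [CompleteSpace E]
  [SecondCountableTopology E] [BorelSpace E]

lemma integrable_rlip {ν : Measure E} (hν : FiniteFirstMoment ν) {K : ℝ} {f : E → ℝ}
    (hf : RLip K f) : Integrable f ν := by
  obtain ⟨hp, a, ha⟩ := hν
  refine Integrable.mono' ((integrable_const |f a|).add (ha.const_mul K))
    hf.continuous.aestronglyMeasurable (ae_of_all _ fun x => ?_)
  have h1 := hf a x
  have h2 := abs_sub_abs_le_abs_sub (f x) (f a)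
  rw [abs_sub_comm] at h2
  simp only [Pi.add_apply, Real.norm_eq_abs]
  linarith

lemma abs_integral_sub_le {ν : Measure E} (hν : FiniteFirstMoment ν) {K : ℝ} {f : E → ℝ}
    (hf : RLip K f) (a : E) : |f a - ∫ y, f y ∂ν| ≤ K * ∫ y, dist a y ∂ν := by
  have hp := hν.1
  have hd : RLip 1 (fun y => dist a y) := fun x y => by
    simp only [one_mul, dist_comm a]; exact abs_dist_sub_le _ _ _
  have i1 := integrable_rlip hν hf
  have i2 := integrable_rlip hν hd
  have : f a - ∫ y, f y ∂ν = ∫ y, (f a - f y) ∂ν := by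
    rw [integral_sub (integrable_const _) i1]; simp
  rw [this, ← integral_const_mul]
  refine (abs_integral_le_integral_abs).trans
    (integral_mono ((integrable_const _).sub i1).abs (i2.const_mul _) fun y => hf a y)

lemma ffm_dirac (x : E) : FiniteFirstMoment (Measure.dirac x) :=
  ⟨inferInstance, x, integrable_dirac (by simp)⟩

lemma wass_dirac_le (x y : E) : wassDist (Measure.dirac x) (Measure.dirac y) ≤ dist x y := by
  refine Real.sSup_le ?_ dist_nonneg
  rintro r ⟨f, hf, rfl⟩
  rw [integral_dirac, integral_dirac, ← Real.dist_eq]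
  simpa using hf.dist_le_mul x y

lemma le_wass {ν₁ ν₂ : Measure E} (h₁ : FiniteFirstMoment ν₁) (h₂ : FiniteFirstMoment ν₂)
    {K : ℝ} (hK : 0 ≤ K) {f : E → ℝ} (hf : RLip K f) :
    |∫ x, f x ∂ν₁ - ∫ x, f x ∂ν₂| ≤ K * wassDist ν₁ ν₂ := by
  obtain ⟨a, -⟩ := h₁.2
  have hbdd : BddAbove {r : ℝ | ∃ f : E → ℝ, LipschitzWith 1 f ∧
      r = |∫ x, f x ∂ν₁ - ∫ x, f x ∂ν₂|} := by
    refine ⟨∫ y, dist a y ∂ν₁ + ∫ y, dist a y ∂ν₂, ?_⟩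
    rintro r ⟨g, hg, rfl⟩
    have hg' : RLip 1 g := fun x y => by
      rw [← Real.dist_eq]; simpa using hg.dist_le_mul x y
    have b1 := abs_integral_sub_le h₁ hg' a
    have b2 := abs_integral_sub_le h₂ hg' a
    rw [abs_le] at b1 b2 ⊢
    constructor <;> linarith
  rcases hK.eq_or_lt with rfl | hK
  · have : ∀ x, f x = f a := fun x => by
      have := hf x a
      rw [zero_mul] at this
      exact sub_eq_zero.1 (abs_nonpos_iff.1 this)
    have := h₁.1
    have := h₂.1
    simp_rw [‹∀ x, f x = f a›]
    simp
  · have hg : LipschitzWith 1 (fun x => K⁻¹ * f x) := by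
      refine LipschitzWith.of_dist_le_mul fun x y => ?_
      rw [Real.dist_eq, ← mul_sub, abs_mul, abs_of_pos (inv_pos.2 hK), NNReal.coe_one, one_mul,
        inv_mul_le_iff₀ hK]
      exact hf x y
    have := le_csSup hbdd ⟨_, hg, rfl⟩
    rw [integral_const_mul, integral_const_mul, ← mul_sub, abs_mul, abs_of_pos (inv_pos.2 hK),
      inv_mul_le_iff₀ hK] at this
    exact this

lemma ffm_kernel (π : Kernel E E)
    (hH1 : ∀ ν : Measure E, FiniteFirstMoment ν → FiniteFirstMoment (Pmeas π ν)) (x : E) :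
    FiniteFirstMoment (π x) := by
  have := hH1 _ (ffm_dirac x)
  rwa [Pmeas, Measure.dirac_bind π.measurable] at this

lemma ffm_iter (π : Kernel E E)
    (hH1 : ∀ ν : Measure E, FiniteFirstMoment ν → FiniteFirstMoment (Pmeas π ν)) (n : ℕ) :
    ∀ ν : Measure E, FiniteFirstMoment ν → FiniteFirstMoment ((Pmeas π)^[n] ν) := by
  induction n with
  | zero => exact fun ν h => h
  | succ n ih => intro ν h; rw [Function.iterate_succ_apply]; exact ih _ (hH1 _ h)

lemma integral_Pmeas (π : Kernel E E) [IsMarkovKernel π]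
    (hH1 : ∀ ν : Measure E, FiniteFirstMoment ν → FiniteFirstMoment (Pmeas π ν))
    {ν : Measure E} (hν : FiniteFirstMoment ν) {K : ℝ} {f : E → ℝ} (hf : RLip K f) :
    ∫ x, f x ∂(Pmeas π ν) = ∫ x, Pfun π f x ∂ν := by
  have := hν.1
  have hi := integrable_rlip (hH1 _ hν) hf
  change Integrable f (π ∘ₘ ν) at hi
  change ∫ x, f x ∂(π ∘ₘ ν) = _
  rw [Measure.comp_eq_comp_const_apply] at hi ⊢
  rw [Kernel.integral_comp hi]
  simp [Pfun]

lemma rlip_Pfun (π : Kernel E E) [IsMarkovKernel π] (γ c : ℝ)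
    (hγ : γ ∈ Set.Ioo (0 : ℝ) 1) (hc : 0 < c)
    (hH1 : ∀ ν : Measure E, FiniteFirstMoment ν → FiniteFirstMoment (Pmeas π ν))
    (hH2 : ∀ n : ℕ, 1 ≤ n → ∀ ν₁ ν₂ : Measure E, FiniteFirstMoment ν₁ →
      FiniteFirstMoment ν₂ →
      wassDist ((Pmeas π)^[n] ν₁) ((Pmeas π)^[n] ν₂) ≤ c * γ ^ n * wassDist ν₁ ν₂)
    {K : ℝ} (hK : 0 ≤ K) {f : E → ℝ} (hf : RLip K f) : RLip (K * (c * γ)) (Pfun π f) := by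
  intro x y
  have h1 := le_wass (ffm_kernel π hH1 x) (ffm_kernel π hH1 y) hK hf
  have h2 := hH2 1 le_rfl _ _ (ffm_dirac x) (ffm_dirac y)
  simp only [Function.iterate_one, Pmeas, Measure.dirac_bind π.measurable, pow_one] at h2
  have h3 := wass_dirac_le x y
  have hcg : 0 ≤ c * γ := mul_nonneg hc.le hγ.1.le
  calc _ ≤ K * wassDist (π x) (π y) := h1
    _ ≤ K * (c * γ * dist x y) := by gcongr; exact h2.trans (by gcongr)
    _ = _ := by ring

lemma exists_corrector (π : Kernel E E) [IsMarkovKernel π] (γ c : ℝ)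
    (hγ : γ ∈ Set.Ioo (0 : ℝ) 1) (hc : 0 < c)
    (hH1 : ∀ ν : Measure E, FiniteFirstMoment ν → FiniteFirstMoment (Pmeas π ν))
    (hH2 : ∀ n : ℕ, 1 ≤ n → ∀ ν₁ ν₂ : Measure E, FiniteFirstMoment ν₁ →
      FiniteFirstMoment ν₂ →
      wassDist ((Pmeas π)^[n] ν₁) ((Pmeas π)^[n] ν₂) ≤ c * γ ^ n * wassDist ν₁ ν₂)
    (μstar : Measure E) (hμstar : FiniteFirstMoment μstar) (hinv : Pmeas π μstar = μstar)
    (ψ : E → ℝ) (L : ℝ) (hL : 0 ≤ L) (hψ : RLip L ψ) (hψ0 : ∫ x, ψ x ∂μstar = 0) :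
    ∃ (χ : E → ℝ) (K : ℝ), 0 ≤ K ∧ RLip K χ ∧ ∀ x, χ x - Pfun π χ x = ψ x := by
  obtain ⟨hγ0, hγ1⟩ := hγ
  set u : ℕ → E → ℝ := fun n => (Pfun π)^[n] ψ with hu
  have hus : ∀ n, u (n + 1) = Pfun π (u n) := fun n => Function.iterate_succ_apply' _ _ _
  have hrl : ∀ n, ∃ K, 0 ≤ K ∧ RLip K (u n) := by
    intro n
    induction n with
    | zero => exact ⟨L, hL, hψ⟩
    | succ n ih =>
      obtain ⟨K, hK, h⟩ := ih
      rw [hus]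
      exact ⟨_, by positivity, rlip_Pfun π γ c ⟨hγ0, hγ1⟩ hc hH1 hH2 hK h⟩
  have hint : ∀ n, ∀ ν : Measure E, FiniteFirstMoment ν →
      ∫ x, u n x ∂ν = ∫ x, ψ x ∂((Pmeas π)^[n] ν) := by
    intro n
    induction n with
    | zero => intro ν _; rfl
    | succ n ih =>
      intro ν hν
      obtain ⟨K, hK, h⟩ := hrl n
      rw [hus, ← integral_Pmeas π hH1 hν h, ih _ (hH1 _ hν), Function.iterate_succ_apply]
  have hdir : ∀ n x, u n x = ∫ y, ψ y ∂((Pmeas π)^[n] (Measure.dirac x)) := fun n x => by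
    rw [← hint n _ (ffm_dirac x), integral_dirac]
  set C := L * (c + 1) with hC
  have hC0 : 0 ≤ C := by positivity
  have hul : ∀ n, RLip (C * γ ^ n) (u n) := by
    intro n x y
    rcases Nat.eq_zero_or_pos n with rfl | hn
    · have := hψ x y
      have h0 : u 0 = ψ := rfl
      rw [h0, pow_zero, mul_one]
      refine this.trans (mul_le_mul_of_nonneg_right ?_ dist_nonneg)
      rw [hC]; nlinarith
    · rw [hdir, hdir]
      refine (le_wass (ffm_iter π hH1 n _ (ffm_dirac x)) (ffm_iter π hH1 n _ (ffm_dirac y))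
        hL hψ).trans ?_
      have h2 := hH2 n hn _ _ (ffm_dirac x) (ffm_dirac y)
      have h3 := wass_dirac_le x y
      have hg : 0 ≤ γ ^ n := by positivity
      calc _ ≤ L * (c * γ ^ n * dist x y) := by
            gcongr; exact h2.trans (by gcongr)
        _ ≤ L * ((c + 1) * γ ^ n * dist x y) := by gcongr; linarith
        _ = _ := by rw [hC]; ring
  have hzero : ∀ n, ∫ x, u n x ∂μstar = 0 := by
    intro n
    rw [hint n _ hμstar, Function.iterate_fixed hinv, hψ0]
  set D : E → ℝ := fun x => ∫ y, dist x y ∂μstar with hD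
  have hD0 : ∀ x, 0 ≤ D x := fun x => integral_nonneg fun y => dist_nonneg
  have hub : ∀ n x, |u n x| ≤ C * γ ^ n * D x := by
    intro n x
    have := abs_integral_sub_le hμstar (hul n) x
    rwa [hzero, sub_zero] at this
  have hdl : ∀ a : E, RLip 1 (fun y => dist a y) := fun a x y => by
    simp only [one_mul, dist_comm a]; exact abs_dist_sub_le _ _ _
  have hDl : RLip 1 D := by
    have hp := hμstar.1
    intro x y
    have i1 := integrable_rlip hμstar (hdl x)
    have i2 := integrable_rlip hμstar (hdl y)
    simp only [hD]
    rw [← integral_sub i1 i2, one_mul]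
    refine abs_integral_le_integral_abs.trans ?_
    calc _ ≤ ∫ _, dist x y ∂μstar :=
          integral_mono (i1.sub i2).abs (integrable_const _) fun z => abs_dist_sub_le _ _ _
      _ = _ := by simp
  have hgs : Summable (fun n : ℕ => γ ^ n) := summable_geometric_of_lt_one hγ0.le hγ1
  have hus' : ∀ x, Summable (fun n => u n x) := fun x =>
    Summable.of_norm_bounded ((hgs.mul_left C).mul_right (D x)) fun n => hub n x
  have hgs0 : 0 ≤ ∑' n : ℕ, γ ^ n := tsum_nonneg fun n => by positivity
  refine ⟨fun x => ∑' n, u n x, C * ∑' n : ℕ, γ ^ n, by positivity, ?_, ?_⟩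
  · intro x y
    simp only
    rw [← (hus' x).tsum_sub (hus' y), ← Real.norm_eq_abs]
    rw [← tsum_mul_left, ← tsum_mul_right]
    exact tsum_of_norm_bounded ((hgs.mul_left C).mul_right (dist x y)).hasSum fun n => hul n x y
  · intro x
    have hx := ffm_kernel π hH1 x
    have i1 : ∀ n, Integrable (u n) (π x) := fun n => integrable_rlip hx (hul n)
    have hsn : Summable fun n => ∫ y, ‖u n y‖ ∂(π x) := by
      refine Summable.of_nonneg_of_le (fun n => integral_nonneg fun y => norm_nonneg _)
        (fun n => ?_) ((hgs.mul_left C).mul_right (∫ y, D y ∂(π x)))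
      rw [← integral_const_mul]
      exact integral_mono (i1 n).norm ((integrable_rlip hx hDl).const_mul _) fun y => hub n y
    have h1 : Pfun π (fun x => ∑' n, u n x) x = ∑' n, u (n + 1) x := by
      rw [Pfun, ← integral_tsum_of_summable_integral_norm i1 hsn]
      refine tsum_congr fun n => ?_
      rw [hus]; rfl
    rw [h1]
    simp only
    rw [(hus' x).tsum_eq_zero_add]
    simp [hu]


lemma chain_sq_bdd (P : Measure (ℕ → E)) [IsProbabilityMeasure P] (x₀ : E) (δ : ℝ) (hδ : 0 < δ)
    (hH3int : ∀ n : ℕ, Integrable (fun ω : ℕ → E => dist x₀ (ω n) ^ (2 + δ)) P)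
    (hH3 : ∃ M : ℝ, ∀ n : ℕ, ∫ ω : ℕ → E, dist x₀ (ω n) ^ (2 + δ) ∂P ≤ M)
    {K : ℝ} {f : E → ℝ} (hf : RLip K f) :
    ∃ B : ℝ, ∀ n, MemLp (fun ω : ℕ → E => f (ω n)) 2 P ∧ ∫ ω, f (ω n) ^ 2 ∂P ≤ B := by
  obtain ⟨M, hM⟩ := hH3
  have hb : ∀ x, f x ^ 2 ≤ 2 * f x₀ ^ 2 + 2 * K ^ 2 * (1 + dist x₀ x ^ (2 + δ)) := by
    intro x
    have h1 := hf x₀ x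
    have hd : dist x₀ x ^ 2 ≤ 1 + dist x₀ x ^ (2 + δ) := by
      have hd0 : 0 ≤ dist x₀ x := dist_nonneg
      rcases le_total (dist x₀ x) 1 with h | h
      · have : 0 ≤ dist x₀ x ^ (2 + δ) := Real.rpow_nonneg hd0 _
        nlinarith
      · have := Real.rpow_le_rpow_of_exponent_le h (show (2 : ℝ) ≤ 2 + δ by linarith)
        rw [Real.rpow_two] at this
        linarith
    have h2 : (f x₀ - f x) ^ 2 ≤ K ^ 2 * dist x₀ x ^ 2 := by
      rw [← sq_abs, ← mul_pow]
      exact pow_le_pow_left₀ (abs_nonneg _) h1 2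
    have h3 : K ^ 2 * dist x₀ x ^ 2 ≤ K ^ 2 * (1 + dist x₀ x ^ (2 + δ)) := by gcongr
    nlinarith [sq_nonneg (2 * f x₀ - f x)]
  refine ⟨2 * f x₀ ^ 2 + 2 * K ^ 2 * (1 + M), fun n => ?_⟩
  have hm : Measurable (fun ω : ℕ → E => f (ω n)) :=
    hf.continuous.measurable.comp (measurable_pi_apply n)
  have ib : Integrable (fun ω : ℕ → E =>
      2 * f x₀ ^ 2 + 2 * K ^ 2 * (1 + dist x₀ (ω n) ^ (2 + δ))) P :=
    (integrable_const _).add (((integrable_const _).add (hH3int n)).const_mul _)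
  have is : Integrable (fun ω : ℕ → E => f (ω n) ^ 2) P := by
    refine ib.mono' (hm.pow_const 2).aestronglyMeasurable (ae_of_all _ fun ω => ?_)
    rw [Real.norm_eq_abs, abs_of_nonneg (sq_nonneg _)]
    exact hb _
  refine ⟨(memLp_two_iff_integrable_sq hm.aestronglyMeasurable).2 is, ?_⟩
  refine (integral_mono is ib fun ω => hb (ω n)).trans ?_
  rw [integral_add (integrable_const _) (by exact ((integrable_const _).add (hH3int n)).const_mul _),
    integral_const_mul (2 * K ^ 2), integral_add (integrable_const _) (hH3int n)]
  simp only [integral_const, probReal_univ, smul_eq_mul, one_mul]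
  have := hM n
  gcongr

lemma measurable_natFilt {f : E → ℝ} (hf : Measurable f) (n : ℕ) :
    StronglyMeasurable[(natFilt (E := E)) n] (fun ω : ℕ → E => f (ω n)) := by
  have h := (Filtration.stronglyAdapted_natural
    (u := fun k (ω : ℕ → E) => ω k) (fun k => (measurable_pi_apply k).stronglyMeasurable)) n
  exact (hf.comp h.measurable).stronglyMeasurable

lemma chain_condExp (π : Kernel E E) [IsMarkovKernel π] (γ c : ℝ)
    (hγ : γ ∈ Set.Ioo (0 : ℝ) 1) (hc : 0 < c)
    (hH1 : ∀ ν : Measure E, FiniteFirstMoment ν → FiniteFirstMoment (Pmeas π ν))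
    (hH2 : ∀ n : ℕ, 1 ≤ n → ∀ ν₁ ν₂ : Measure E, FiniteFirstMoment ν₁ →
      FiniteFirstMoment ν₂ →
      wassDist ((Pmeas π)^[n] ν₁) ((Pmeas π)^[n] ν₂) ≤ c * γ ^ n * wassDist ν₁ ν₂)
    (μ : Measure E) (P : Measure (ℕ → E)) [IsProbabilityMeasure P] (hP : IsMarkovChainLaw π μ P)
    (hL : ∀ (K : ℝ) (f : E → ℝ), RLip K f → ∀ n, Integrable (fun ω : ℕ → E => f (ω n)) P)
    {K : ℝ} (hK : 0 ≤ K) {f : E → ℝ} (hf : RLip K f) (n : ℕ) :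
    P[(fun ω => f (ω (n + 1))) | natFilt n] =ᵐ[P] fun ω => Pfun π f (ω n) := by
  set g : ℕ → E → ℝ := fun m x => max (-(m : ℝ)) (min (f x) m) with hg
  have hfm : Measurable f := hf.continuous.measurable
  have hgm : ∀ m, Measurable (g m) := fun m =>
    measurable_const.max (hfm.min measurable_const)
  have hgb : ∀ m x, |g m x| ≤ m := by
    intro m x
    have : (0 : ℝ) ≤ m := Nat.cast_nonneg m
    simp only [hg, abs_le]
    exact ⟨le_max_left _ _, max_le (by linarith) (min_le_right _ _)⟩
  have hgf : ∀ m x, |g m x| ≤ |f x| := by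
    intro m x
    have : (0 : ℝ) ≤ m := Nat.cast_nonneg m
    simp only [hg, abs_le]
    constructor
    · refine le_max_of_le_right (le_min (neg_abs_le _) ?_)
      linarith [abs_nonneg (f x)]
    · exact max_le (by linarith [abs_nonneg (f x)]) ((min_le_left _ _).trans (le_abs_self _))
  have hgt : ∀ x, Tendsto (fun m => g m x) atTop (𝓝 (f x)) := by
    intro x
    refine tendsto_const_nhds.congr' ?_
    obtain ⟨N, hN⟩ := exists_nat_ge |f x|
    filter_upwards [eventually_ge_atTop N] with m hm
    have h1 : |f x| ≤ m := hN.trans (by exact_mod_cast hm)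
    rw [abs_le] at h1
    simp only [hg]
    rw [min_eq_left h1.2, max_eq_right h1.1]
  have hgr : ∀ m, IsBounded (Set.range (g m)) := by
    intro m
    refine (Metric.isBounded_closedBall (x := (0 : ℝ)) (r := m)).subset ?_
    rintro _ ⟨x, rfl⟩
    simpa using hgb m x
  have hPm : ∀ m, Measurable (fun x => ∫ y, g m y ∂(π x)) := fun m =>
    ((hgm m).stronglyMeasurable.integral_kernel (κ := π)).measurable
  have hkx : ∀ x, Integrable (fun y => |f y|) (π x) := fun x =>
    integrable_rlip (ffm_kernel π hH1 x) hf.abs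
  have hkg : ∀ m x, Integrable (g m) (π x) := fun m x =>
    (hkx x).mono' (hgm m).aestronglyMeasurable (ae_of_all _ fun y => hgf m y)
  have hPf : RLip (K * (c * γ)) (Pfun π f) := rlip_Pfun π γ c hγ hc hH1 hH2 hK hf
  have hPa : RLip (K * (c * γ)) (Pfun π fun y => |f y|) :=
    rlip_Pfun π γ c hγ hc hH1 hH2 hK hf.abs
  have hPb : ∀ m x, ‖∫ y, g m y ∂(π x)‖ ≤ Pfun π (fun y => |f y|) x := fun m x =>
    (norm_integral_le_integral_norm _).trans
      (integral_mono (hkg m x).norm (hkx x) fun y => hgf m y)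
  have i1 : ∀ m, Integrable (fun ω : ℕ → E => g m (ω (n + 1))) P := fun m =>
    (hL _ _ hf.abs (n + 1)).mono'
      ((hgm m).comp (measurable_pi_apply (n + 1))).aestronglyMeasurable
      (ae_of_all _ fun ω => hgf m _)
  have i2 : ∀ m, Integrable (fun ω : ℕ → E => ∫ y, g m y ∂(π (ω n))) P := fun m =>
    (hL _ _ hPa n).mono'
      ((hPm m).comp (measurable_pi_apply n)).aestronglyMeasurable
      (ae_of_all _ fun ω => hPb m _)
  have key := tendsto_condExp_unique (m := natFilt (E := E) n) (μ := P)
    (fun m (ω : ℕ → E) => g m (ω (n + 1))) (fun m (ω : ℕ → E) => ∫ y, g m y ∂(π (ω n)))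
    (fun ω => f (ω (n + 1))) (fun ω => Pfun π f (ω n)) i1 i2
    (ae_of_all _ fun ω => hgt _)
    (ae_of_all _ fun ω => tendsto_integral_of_dominated_convergence (fun y => |f y|)
      (fun m => (hgm m).aestronglyMeasurable) (hkx _) (fun m => ae_of_all _ fun y => hgf m y)
      (ae_of_all _ fun y => hgt y))
    (fun ω => |f (ω (n + 1))|) (hL _ _ hf.abs (n + 1))
    (fun ω => Pfun π (fun y => |f y|) (ω n)) (hL _ _ hPa n)
    (fun m => ae_of_all _ fun ω => hgf m _) (fun m => ae_of_all _ fun ω => hPb m _)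
    (fun m => by
      rw [condExp_of_stronglyMeasurable ((natFilt (E := E)).le n)
        (measurable_natFilt (hPm m) n) (i2 m)]
      exact hP.markov n (g m) (hgm m) (hgr m))
  rwa [condExp_of_stronglyMeasurable ((natFilt (E := E)).le n)
        (measurable_natFilt hPf.continuous.measurable n) (hL _ _ hPf n)] at key

end

/-- The strong law of large numbers: `(1/n) ∑_{i=1}^n ψ(X_i) → 0` `P_μ`-almost surely. -/
theorem slln_for_markov_chain
    {E : Type*} [MeasurableSpace E] [MetricSpace E] [CompleteSpace E]
    [SecondCountableTopology E] [BorelSpace E]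
    (π : Kernel E E) [IsMarkovKernel π] (γ c : ℝ) (hγ : γ ∈ Set.Ioo (0 : ℝ) 1) (hc : 0 < c)
    -- (H0): the Feller property
    (hH0 : ∀ f : E → ℝ, Continuous f → IsBounded (Set.range f) → Continuous (Pfun π f))
    -- (H1): `P` preserves `M_{1,1}`
    (hH1 : ∀ ν : MeasureTheory.Measure E, FiniteFirstMoment ν → FiniteFirstMoment (Pmeas π ν))
    -- (H2): spectral gap in the Wasserstein metric
    (hH2 : ∀ n : ℕ, 1 ≤ n → ∀ ν₁ ν₂ : MeasureTheory.Measure E, FiniteFirstMoment ν₁ →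
      FiniteFirstMoment ν₂ →
      wassDist ((Pmeas π)^[n] ν₁) ((Pmeas π)^[n] ν₂) ≤ c * γ ^ n * wassDist ν₁ ν₂)
    -- the chain: initial distribution `μ ∈ M_{1,1}` and its law `Pμ` on `E^ℕ`
    (μ : MeasureTheory.Measure E) (hμ : FiniteFirstMoment μ)
    (Pμ : MeasureTheory.Measure (ℕ → E)) (hPμ : IsMarkovChainLaw π μ Pμ)
    -- (H3): uniformly bounded moments of order `2 + δ`
    (x₀ : E) (δ : ℝ) (hδ : 0 < δ)
    (hH3int : ∀ n : ℕ, Integrable (fun ω : ℕ → E => dist x₀ (ω n) ^ (2 + δ)) Pμ)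
    (hH3 : ∃ M : ℝ, ∀ n : ℕ, ∫ ω : ℕ → E, dist x₀ (ω n) ^ (2 + δ) ∂Pμ ≤ M)
    -- the unique invariant measure `μ* ∈ M_{1,1}`
    (μstar : MeasureTheory.Measure E) (hμstar : FiniteFirstMoment μstar)
    (hinv : Pmeas π μstar = μstar)
    (huniq : ∀ ν : MeasureTheory.Measure E, IsProbabilityMeasure ν → Pmeas π ν = ν → ν = μstar)
    -- `ψ` is Lipschitz with `⟨ψ, μ*⟩ = 0`
    (ψ : E → ℝ) (Lψ : ℝ≥0) (hψ : LipschitzWith Lψ ψ) (hψ0 : ∫ x, ψ x ∂μstar = 0) :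
    ∀ᵐ ω ∂Pμ, Tendsto
      (fun n : ℕ => (∑ i ∈ Finset.Icc 1 n, ψ (ω i)) / (n : ℝ)) atTop (𝓝 0) := by
  have hprob := hPμ.prob
  have hψ' : RLip (Lψ : ℝ) ψ := fun x y => by
    rw [← Real.dist_eq]; exact hψ.dist_le_mul x y
  obtain ⟨χ, K, hK, hχ, hcorr⟩ := exists_corrector π γ c hγ hc hH1 hH2 μstar hμstar hinv ψ
    Lψ Lψ.2 hψ' hψ0
  have hsq := fun {K : ℝ} {f : E → ℝ} (hf : RLip K f) =>
    chain_sq_bdd Pμ x₀ δ hδ hH3int hH3 hf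
  have hL : ∀ (K : ℝ) (f : E → ℝ), RLip K f → ∀ n, Integrable (fun ω : ℕ → E => f (ω n)) Pμ := by
    intro K f hf n
    obtain ⟨B, hB⟩ := hsq hf
    exact (hB n).1.integrable (by norm_num)
  have hφ : RLip (K * (c * γ)) (Pfun π χ) := rlip_Pfun π γ c hγ hc hH1 hH2 hK hχ
  obtain ⟨B₁, hB₁⟩ := hsq hχ
  obtain ⟨B₂, hB₂⟩ := hsq hφ
  have hZ := slln_martingale_diff Pμ (natFilt (E := E))
    (fun k ω => χ (ω (k + 1)) - Pfun π χ (ω k)) (2 * B₁ + 2 * B₂)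
    (fun k => (measurable_natFilt hχ.continuous.measurable (k + 1)).sub
      ((measurable_natFilt hφ.continuous.measurable k).mono
        ((natFilt (E := E)).mono (Nat.le_succ k))))
    (fun k => (hB₁ (k + 1)).1.sub (hB₂ k).1)
    (fun k => by
      have j1 := (hB₁ (k + 1)).1.integrable_sq
      have j2 := (hB₂ k).1.integrable_sq
      calc ∫ ω, (χ (ω (k + 1)) - Pfun π χ (ω k)) ^ 2 ∂Pμ
          ≤ ∫ ω, (2 * χ (ω (k + 1)) ^ 2 + 2 * Pfun π χ (ω k) ^ 2) ∂Pμ := by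
            refine integral_mono ((hB₁ (k + 1)).1.sub (hB₂ k).1).integrable_sq
              ((j1.const_mul 2).add (j2.const_mul 2)) fun ω => ?_
            simp only
            nlinarith [sq_nonneg (χ (ω (k + 1)) + Pfun π χ (ω k))]
        _ = 2 * ∫ ω, χ (ω (k + 1)) ^ 2 ∂Pμ + 2 * ∫ ω, Pfun π χ (ω k) ^ 2 ∂Pμ := by
            rw [integral_add (j1.const_mul 2) (j2.const_mul 2), integral_const_mul,
              integral_const_mul]
        _ ≤ _ := by linarith [(hB₁ (k + 1)).2, (hB₂ k).2])
    (fun k => by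
      have h1 := condExp_sub (μ := Pμ) (hL _ _ hχ (k + 1)) (hL _ _ hφ k) (natFilt (E := E) k)
      have h2 := chain_condExp π γ c hγ hc hH1 hH2 μ Pμ hPμ hL hK hχ k
      rw [condExp_of_stronglyMeasurable ((natFilt (E := E)).le k)
        (measurable_natFilt hφ.continuous.measurable k) (hL _ _ hφ k)] at h1
      refine h1.trans ?_
      filter_upwards [h2] with ω h2
      simp [h2])
  have hY := tendsto_div_of_sq_bdd Pμ (fun k ω => Pfun π χ (ω k)) B₂ (fun k => (hB₂ k).1)
    (fun k => (hB₂ k).2)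
  filter_upwards [hZ, hY] with ω h1 h2
  have h3 : Tendsto (fun n : ℕ => Pfun π χ (ω 0) / (n : ℝ)) atTop (𝓝 0) :=
    tendsto_const_div_atTop_nhds_zero_nat _
  have h4 := (h1.add h3).sub h2
  simp only [add_zero, sub_zero] at h4
  refine h4.congr fun n => ?_
  rw [← add_div, ← sub_div]
  congr 1
  induction n with
  | zero => simp
  | succ n ih =>
    rw [Finset.sum_range_succ, Finset.sum_Icc_succ_top (by omega), ← ih, ← hcorr (ω (n + 1))]
    ring
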